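/- The n-shuffle product ш̄ on H is commutative and associative: for all w1, w2, w3 ∈ H one has w1 ш̄ w2 = w2 ш̄ w1 and (w1 ш̄ w2) ш̄ w3 = w1 ш̄ (w2 ш̄ w3). -/

import Mathlib

open scoped BigOperators

/-- The two-letter alphabet {x, y}. -/
inductive Letter : Type
  | x : Letter
  | y : Letter
deriving DecidableEq

/-- `H = ℚ⟨x,y⟩`, the noncommutative polynomial ring over ℚ in two
indeterminates, realized as the monoid algebra of the free monoid on `{x,y}`. -/
abbrev H : Type := MonoidAlgebra ℚ (FreeMonoid Letter)

namespace H

/-- The monomial (word) of `H` corresponding to an element of the free monoid. -/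
noncomputable def word (w : FreeMonoid Letter) : H := MonoidAlgebra.single w 1

/-- The generator `x`. -/
noncomputable def X : H := word (FreeMonoid.of Letter.x)

/-- The generator `y`. -/
noncomputable def Y : H := word (FreeMonoid.of Letter.y)

/-- The word `z_k = x^{k-1} y` (for `k ≥ 1`). -/
def zW (k : ℕ) : FreeMonoid Letter :=
  FreeMonoid.ofList (List.replicate (k - 1) Letter.x ++ [Letter.y])

/-- `z_k = x^{k-1} y` as an element of `H`. -/
noncomputable def z (k : ℕ) : H := word (zW k)

/-- A list `[k₁,…,kₙ]` gives the word `z_{k₁} z_{k₂} ⋯ z_{kₙ}`. -/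
def zListW (ks : List ℕ) : FreeMonoid Letter :=
  FreeMonoid.ofList (ks.flatMap fun k => List.replicate (k - 1) Letter.x ++ [Letter.y])

/-- `H¹ = ℚ + Hy` as a ℚ-submodule of `H`. -/
noncomputable def H1 : Submodule ℚ H :=
  LinearMap.range (LinearMap.mulRight ℚ Y) ⊔ Submodule.span ℚ {1}

/-- `H⁰ = ℚ + xHy` as a ℚ-submodule of `H`. -/
noncomputable def H0 : Submodule ℚ H :=
  LinearMap.range ((LinearMap.mulRight ℚ Y).comp (LinearMap.mulLeft ℚ X)) ⊔
    Submodule.span ℚ {1}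

/-- Parse a word of `H¹` into the exponent list of its `z`-decomposition:
`z_{k₁}⋯z_{kₙ} ↦ [k₁,…,kₙ]` (auxiliary accumulator version). -/
def toZAux : List Letter → ℕ → List ℕ
  | [], _ => []
  | Letter.x :: r, n => toZAux r (n + 1)
  | Letter.y :: r, n => (n + 1) :: toZAux r 0

/-- The `z`-decomposition of a word of `H¹`. -/
def toZ (w : FreeMonoid Letter) : List ℕ := toZAux (FreeMonoid.toList w) 0

/-- The harmonic product on words of `H¹` (via `z`-decompositions):
`1 * w = w * 1 = w` and
`z_k w₁ * z_l w₂ = z_k (w₁ * z_l w₂) + z_l (z_k w₁ * w₂) + z_{k+l} (w₁ * w₂)`. -/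
noncomputable def harmW : List ℕ → List ℕ → H
  | [], w => word (zListW w)
  | k :: w1, [] => word (zListW (k :: w1))
  | k :: w1, l :: w2 =>
      z k * harmW w1 (l :: w2) + z l * harmW (k :: w1) w2 + z (k + l) * harmW w1 w2
termination_by w1 w2 => w1.length + w2.length
decreasing_by all_goals simp [Nat.lt_succ_iff] <;> omega

/-- The n-harmonic product on words of `H¹`:
`1 *̄ w = w *̄ 1 = w` and
`z_k w₁ *̄ z_l w₂ = z_k (w₁ *̄ z_l w₂) + z_l (z_k w₁ *̄ w₂) − z_{k+l} (w₁ *̄ w₂)`. -/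
noncomputable def nharmW : List ℕ → List ℕ → H
  | [], w => word (zListW w)
  | k :: w1, [] => word (zListW (k :: w1))
  | k :: w1, l :: w2 =>
      z k * nharmW w1 (l :: w2) + z l * nharmW (k :: w1) w2 - z (k + l) * nharmW w1 w2
termination_by w1 w2 => w1.length + w2.length
decreasing_by all_goals simp [Nat.lt_succ_iff] <;> omega

/-- The harmonic product `*` on `H¹`, extended ℚ-bilinearly. -/
noncomputable def harm (a b : H) : H :=
  Finsupp.sum a.coeff fun w1 c1 =>
    Finsupp.sum b.coeff fun w2 c2 => (c1 * c2) • harmW (toZ w1) (toZ w2)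

/-- The n-harmonic product `*̄` on `H¹`, extended ℚ-bilinearly. -/
noncomputable def nharm (a b : H) : H :=
  Finsupp.sum a.coeff fun w1 c1 =>
    Finsupp.sum b.coeff fun w2 c2 => (c1 * c2) • nharmW (toZ w1) (toZ w2)

/-- The letter exchange `τ(x) = y`, `τ(y) = x`. -/
def τ : Letter → Letter
  | Letter.x => Letter.y
  | Letter.y => Letter.x

/-- `δ(w) = 1` if `w` is the empty word, `0` otherwise. -/
def δ : List Letter → ℚ
  | [] => 1
  | _ :: _ => 0

/-- The shuffle product on words:
`1 ш w = w ш 1 = w` and `u₁w₁ ш u₂w₂ = u₁(w₁ ш u₂w₂) + u₂(u₁w₁ ш w₂)`. -/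
noncomputable def shW : List Letter → List Letter → H
  | [], w => word (FreeMonoid.ofList w)
  | u :: w, [] => word (FreeMonoid.ofList (u :: w))
  | u1 :: w1, u2 :: w2 =>
      word (FreeMonoid.of u1) * shW w1 (u2 :: w2) +
        word (FreeMonoid.of u2) * shW (u1 :: w1) w2
termination_by w1 w2 => w1.length + w2.length
decreasing_by all_goals simp [Nat.lt_succ_iff]

/-- The n-shuffle product on words: `1 ш̄ w = w ш̄ 1 = w` and
`u₁w₁ ш̄ u₂w₂ = u₁(w₁ ш̄ u₂w₂) + u₂(u₁w₁ ш̄ w₂) − δ(w₁)τ(u₁)u₂w₂ − δ(w₂)τ(u₂)u₁w₁`. -/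
noncomputable def nshW : List Letter → List Letter → H
  | [], w => word (FreeMonoid.ofList w)
  | u :: w, [] => word (FreeMonoid.ofList (u :: w))
  | u1 :: w1, u2 :: w2 =>
      word (FreeMonoid.of u1) * nshW w1 (u2 :: w2) +
        word (FreeMonoid.of u2) * nshW (u1 :: w1) w2 -
        δ w1 • word (FreeMonoid.ofList (τ u1 :: u2 :: w2)) -
        δ w2 • word (FreeMonoid.ofList (τ u2 :: u1 :: w1))
termination_by w1 w2 => w1.length + w2.length
decreasing_by all_goals simp [Nat.lt_succ_iff]

/-- The shuffle product `ш` on `H`, extended ℚ-bilinearly. -/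
noncomputable def sh (a b : H) : H :=
  Finsupp.sum a.coeff fun w1 c1 =>
    Finsupp.sum b.coeff fun w2 c2 =>
      (c1 * c2) • shW (FreeMonoid.toList w1) (FreeMonoid.toList w2)

/-- The n-shuffle product `ш̄` on `H`, extended ℚ-bilinearly. -/
noncomputable def nsh (a b : H) : H :=
  Finsupp.sum a.coeff fun w1 c1 =>
    Finsupp.sum b.coeff fun w2 c2 =>
      (c1 * c2) • nshW (FreeMonoid.toList w1) (FreeMonoid.toList w2)

/-- `S₁`: the ℚ-algebra endomorphism of `H` with `S₁(x) = x`, `S₁(y) = x + y`. -/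
noncomputable def S1 : H →ₐ[ℚ] H :=
  MonoidAlgebra.lift ℚ H (FreeMonoid Letter)
    (FreeMonoid.lift fun u => match u with
      | Letter.x => X
      | Letter.y => X + Y)

/-- `S₂`: the ℚ-algebra endomorphism of `H` with `S₂(x) = x`, `S₂(y) = y − x`. -/
noncomputable def S2 : H →ₐ[ℚ] H :=
  MonoidAlgebra.lift ℚ H (FreeMonoid Letter)
    (FreeMonoid.lift fun u => match u with
      | Letter.x => X
      | Letter.y => Y - X)

/-- `S` on a word: `S(1) = 1` and `S(Fy) = S₁(F)y`. -/
noncomputable def SW (w : FreeMonoid Letter) : H :=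
  match (FreeMonoid.toList w).getLast? with
  | some Letter.y =>
      S1 (word (FreeMonoid.ofList (FreeMonoid.toList w).dropLast)) * Y
  | _ => word w

/-- The ℚ-linear map `S : H¹ → H¹` with `S(1) = 1`, `S(Fy) = S₁(F)y`. -/
noncomputable def S (a : H) : H := Finsupp.sum a.coeff fun w c => c • SW w

/-- `S̃` on a word: `S̃(1) = 1` and `S̃(Fy) = S₂(F)y`. -/
noncomputable def StW (w : FreeMonoid Letter) : H :=
  match (FreeMonoid.toList w).getLast? with
  | some Letter.y =>
      S2 (word (FreeMonoid.ofList (FreeMonoid.toList w).dropLast)) * Y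
  | _ => word w

/-- The ℚ-linear map `S̃ : H¹ → H¹` with `S̃(1) = 1`, `S̃(Fy) = S₂(F)y`. -/
noncomputable def St (a : H) : H := Finsupp.sum a.coeff fun w c => c • StW w

/-- The multiple zeta value `ζ(k₁,…,kₙ)`: the sum over strictly decreasing
tuples `m₁ > m₂ > ⋯ > mₙ > 0` of `1/(m₁^{k₁}⋯mₙ^{kₙ})`. -/
noncomputable def mzeta (ks : List ℕ) : ℝ :=
  ∑' m : {f : Fin ks.length → ℕ // (∀ i, 0 < f i) ∧
      ∀ i j : Fin ks.length, i < j → f j < f i},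
    ∏ i : Fin ks.length, ((m.1 i : ℝ) ^ ks.get i)⁻¹

/-- The non-strict multiple zeta value `ζ̄(k₁,…,kₙ)`: the sum over weakly
decreasing tuples `m₁ ≥ m₂ ≥ ⋯ ≥ mₙ > 0` of `1/(m₁^{k₁}⋯mₙ^{kₙ})`. -/
noncomputable def nmzeta (ks : List ℕ) : ℝ :=
  ∑' m : {f : Fin ks.length → ℕ // (∀ i, 0 < f i) ∧
      ∀ i j : Fin ks.length, i ≤ j → f j ≤ f i},
    ∏ i : Fin ks.length, ((m.1 i : ℝ) ^ ks.get i)⁻¹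

/-- The evaluation map `Z : H⁰ → ℝ`, `Z(1) = 1`,
`Z(z_{k₁}⋯z_{kₙ}) = ζ(k₁,…,kₙ)` (extended ℚ-linearly to `H`). -/
noncomputable def Z (a : H) : ℝ := Finsupp.sum a.coeff fun w c => (c : ℝ) * mzeta (toZ w)

/-- The n-evaluation map `Z̄ : H⁰ → ℝ`, `Z̄(1) = 1`,
`Z̄(z_{k₁}⋯z_{kₙ}) = ζ̄(k₁,…,kₙ)` (extended ℚ-linearly to `H`). -/
noncomputable def Zbar (a : H) : ℝ := Finsupp.sum a.coeff fun w c => (c : ℝ) * nmzeta (toZ w)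

/-- `i`-fold n-harmonic power: `a^{*̄ 0} = 1`, `a^{*̄ (i+1)} = a *̄ a^{*̄ i}`. -/
noncomputable def nharmPow : ℕ → H → H
  | 0, _ => 1
  | i + 1, a => nharm a (nharmPow i a)

/-- `i`-fold n-shuffle power: `a^{ш̄ 0} = 1`, `a^{ш̄ (i+1)} = a ш̄ a^{ш̄ i}`. -/
noncomputable def nshPow : ℕ → H → H
  | 0, _ => 1
  | i + 1, a => nsh a (nshPow i a)

end H

open H

/-!
Split the product as `a ш̄ b = a ≺ b + b ≺ a` on words of positive length, where
`u a ≺ b = u (a ш̄ b) - δ(a) τ(u) b` collects the terms whose first letter comes from the left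
factor. Commutativity is a direct induction. The Zinbiel identity `(u a ≺ b) ≺ c = u a ≺ (b ш̄ c)`
amounts to associativity for the triple `a, b, c`, which is shorter. Granting it,
`(a ш̄ b) ш̄ c = a ≺ (b ш̄ c) + b ≺ (a ш̄ c) + c ≺ (a ш̄ b)` is symmetric in the three factors, and
so associativity follows by induction on the total length. Nothing about `-τ` matters here except
that it sends letters to linear combinations of letters.
-/

/-- The noncommutative polynomials over `R` in the letters of an alphabet `α`. -/
abbrev WordAlgebra (R α : Type*) [CommSemiring R] : Type _ := MonoidAlgebra R (FreeMonoid α)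

namespace WordAlgebra

variable {R α : Type*} [CommSemiring R]

/-- The words, encoded as lists of letters, as a basis of the word algebra. -/
noncomputable def monomial : Module.Basis (List α) R (WordAlgebra R α) :=
  (MonoidAlgebra.basis (FreeMonoid α) R).reindex FreeMonoid.toList

theorem monomial_eq_single (w : List α) :
    (monomial w : WordAlgebra R α) = MonoidAlgebra.single (FreeMonoid.ofList w) 1 := by
  simp [monomial]

theorem monomial_nil : (monomial [] : WordAlgebra R α) = 1 :=
  monomial_eq_single []

theorem monomial_cons (u : α) (w : List α) :
    (monomial (u :: w) : WordAlgebra R α) = monomial [u] * monomial w := by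
  simp [monomial_eq_single, MonoidAlgebra.single_mul_single]

theorem constr_monomial_apply {M : Type*} [AddCommMonoid M] [Module R M] (f : List α → M)
    (a : WordAlgebra R α) :
    monomial.constr R f a = a.coeff.sum fun w r => r • f (FreeMonoid.toList w) := by
  rw [Module.Basis.constr_apply, monomial, Module.Basis.repr_reindex]
  exact Finsupp.sum_mapDomain_index_inj FreeMonoid.toList.injective

theorem map_mem_of_forall_map_monomial_mem {M : Type*} [AddCommMonoid M] [Module R M]
    {N : Submodule R M} {f : WordAlgebra R α →ₗ[R] M} (hf : ∀ w, f (monomial w) ∈ N)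
    (a : WordAlgebra R α) : f a ∈ N := by
  suffices ⊤ ≤ N.comap f from this Submodule.mem_top
  rw [← monomial.span_eq, Submodule.span_le]
  rintro _ ⟨w, rfl⟩
  exact hf w

/-- The linear combinations of letters, embedded as the homogeneous elements of degree one. -/
noncomputable def ofLetters : (α →₀ R) →ₗ[R] WordAlgebra R α :=
  Finsupp.linearCombination R fun u => monomial [u]

theorem ofLetters_single (u : α) (r : R) :
    ofLetters (Finsupp.single u r) = r • (monomial [u] : WordAlgebra R α) :=
  Finsupp.linearCombination_single R r u

/-- The constant term, as the algebra map killing all letters. On words it is the paper's `δ`. -/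
noncomputable def counit : WordAlgebra R α →ₐ[R] R :=
  MonoidAlgebra.lift R R (FreeMonoid α) (FreeMonoid.lift fun _ => 0)

theorem counit_monomial_cons (u : α) (w : List α) :
    counit (monomial (u :: w) : WordAlgebra R α) = 0 := by
  simp [counit, monomial_eq_single, FreeMonoid.ofList_cons]

variable (R α) in
/-- The elements without constant term, given as the span of the nonempty words. -/
noncomputable def positive : Submodule R (WordAlgebra R α) :=
  Submodule.span R {a | ∃ u w, monomial (u :: w) = a}

theorem monomial_cons_mem_positive (u : α) (w : List α) : monomial (u :: w) ∈ positive R α :=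
  Submodule.subset_span ⟨u, w, rfl⟩

theorem counit_eq_zero_of_mem_positive {a : WordAlgebra R α} (ha : a ∈ positive R α) :
    counit a = 0 := by
  suffices positive R α ≤ LinearMap.ker counit.toLinearMap from this ha
  refine Submodule.span_le.2 ?_
  rintro _ ⟨u, w, rfl⟩
  exact counit_monomial_cons u w

theorem letter_mul_mem_positive (u : α) (a : WordAlgebra R α) :
    monomial [u] * a ∈ positive R α := by
  refine map_mem_of_forall_map_monomial_mem (f := LinearMap.mulLeft R (monomial [u]))
    (fun w => ?_) a
  rw [LinearMap.mulLeft_apply, ← monomial_cons]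
  exact monomial_cons_mem_positive u w

theorem ofLetters_mul_mem_positive (p : α →₀ R) (a : WordAlgebra R α) :
    ofLetters p * a ∈ positive R α := by
  induction p using Finsupp.induction_linear with
  | zero => simp
  | add p q hp hq => simpa only [map_add, add_mul] using add_mem hp hq
  | single u r =>
    rw [ofLetters_single, smul_mul_assoc]
    exact Submodule.smul_mem _ r (letter_mul_mem_positive u a)

variable (θ : α → α →₀ R)

/-- The `θ`-twisted shuffle product of two words. When the last remaining letter `u` of one word is
put in front of a nonempty remainder of the other, `u + θ u` takes the place of `u`. The usual
shuffle product is the case `θ = 0`, and the n-shuffle product the case `θ = -τ`. -/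
noncomputable def shuffleWord : List α → List α → WordAlgebra R α
  | [], w => monomial w
  | u :: v, [] => monomial (u :: v)
  | u₁ :: w₁, u₂ :: w₂ =>
      monomial [u₁] * shuffleWord w₁ (u₂ :: w₂) + monomial [u₂] * shuffleWord (u₁ :: w₁) w₂ +
        counit (monomial w₁ : WordAlgebra R α) • (ofLetters (θ u₁) * monomial (u₂ :: w₂)) +
        counit (monomial w₂ : WordAlgebra R α) • (ofLetters (θ u₂) * monomial (u₁ :: w₁))
termination_by w₁ w₂ => w₁.length + w₂.length

/-- The `θ`-twisted shuffle product, the bilinear extension of `shuffleWord θ`. -/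
noncomputable def shuffle : WordAlgebra R α →ₗ[R] WordAlgebra R α →ₗ[R] WordAlgebra R α :=
  monomial.constr R fun v => monomial.constr R (shuffleWord θ v)

theorem shuffle_monomial (v w : List α) :
    shuffle θ (monomial v) (monomial w) = shuffleWord θ v w := by
  simp only [shuffle, Module.Basis.constr_basis]

theorem one_shuffle (a : WordAlgebra R α) : shuffle θ 1 a = a := by
  suffices shuffle θ 1 = LinearMap.id from LinearMap.congr_fun this a
  refine monomial.ext fun w => ?_
  rw [← monomial_nil, shuffle_monomial, shuffleWord, LinearMap.id_apply]

theorem shuffleWord_comm (v w : List α) : shuffleWord θ v w = shuffleWord θ w v := by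
  fun_induction shuffleWord θ v w with
  | case1 w => cases w <;> rw [shuffleWord]
  | case2 => rw [shuffleWord]
  | case3 u₁ w₁ u₂ w₂ ih₁ ih₂ =>
    rw [shuffleWord, ih₁, ih₂]
    abel

theorem shuffle_comm (a b : WordAlgebra R α) : shuffle θ a b = shuffle θ b a := by
  suffices shuffle θ = (shuffle θ).flip from LinearMap.congr_fun₂ this a b
  refine LinearMap.ext_basis monomial monomial fun v w => ?_
  rw [LinearMap.flip_apply, shuffle_monomial, shuffle_monomial, shuffleWord_comm]

theorem shuffle_one (a : WordAlgebra R α) : shuffle θ a 1 = a := by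
  rw [shuffle_comm, one_shuffle]

/-- Left multiplication by a word for the half-shuffle `≺`, which keeps the terms of the shuffle
product whose first letter comes from the left factor. The value at the empty word is a
convention. -/
noncomputable def halfShuffleWord : List α → WordAlgebra R α →ₗ[R] WordAlgebra R α
  | [] => 0
  | u :: w =>
      LinearMap.mulLeft R (monomial [u]) ∘ₗ shuffle θ (monomial w) +
        counit (monomial w : WordAlgebra R α) • LinearMap.mulLeft R (ofLetters (θ u))

/-- The `θ`-twisted half-shuffle `≺`, the bilinear extension of `halfShuffleWord θ`. -/
noncomputable def halfShuffle : WordAlgebra R α →ₗ[R] WordAlgebra R α →ₗ[R] WordAlgebra R α :=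
  monomial.constr R (halfShuffleWord θ)

theorem halfShuffle_letter_mul (u : α) (a b : WordAlgebra R α) :
    halfShuffle θ (monomial [u] * a) b =
      monomial [u] * shuffle θ a b + counit a • (ofLetters (θ u) * b) := by
  suffices (halfShuffle θ).flip b ∘ₗ LinearMap.mulLeft R (monomial [u]) =
      LinearMap.mulLeft R (monomial [u]) ∘ₗ (shuffle θ).flip b +
        counit.toLinearMap.smulRight (ofLetters (θ u) * b) from LinearMap.congr_fun this a
  refine monomial.ext fun w => ?_
  simp [← monomial_cons, halfShuffle, halfShuffleWord]

theorem halfShuffle_ofLetters_mul (p : α →₀ R) {a : WordAlgebra R α} (ha : a ∈ positive R α)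
    (b : WordAlgebra R α) :
    halfShuffle θ (ofLetters p * a) b = ofLetters p * shuffle θ a b := by
  induction p using Finsupp.induction_linear with
  | zero => simp
  | add p q hp hq => simp [add_mul, hp, hq]
  | single u r =>
    simp [ofLetters_single, halfShuffle_letter_mul, counit_eq_zero_of_mem_positive ha]

theorem halfShuffle_mem_positive (a b : WordAlgebra R α) :
    halfShuffle θ a b ∈ positive R α := by
  refine map_mem_of_forall_map_monomial_mem (f := (halfShuffle θ).flip b) (fun w => ?_) a
  rw [LinearMap.flip_apply]
  cases w with
  | nil => simp [halfShuffle, halfShuffleWord]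
  | cons u w =>
    rw [monomial_cons, halfShuffle_letter_mul]
    exact add_mem (letter_mul_mem_positive _ _)
      (Submodule.smul_mem _ _ (ofLetters_mul_mem_positive _ _))

theorem shuffle_eq_halfShuffle_add_halfShuffle {a b : WordAlgebra R α} (ha : a ∈ positive R α)
    (hb : b ∈ positive R α) : shuffle θ a b = halfShuffle θ a b + halfShuffle θ b a := by
  induction ha, hb using Submodule.span_induction₂ with
  | mem_mem a b ha hb =>
    obtain ⟨u, v, rfl⟩ := ha
    obtain ⟨u', w, rfl⟩ := hb
    rw [shuffle_monomial, shuffleWord]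
    rw [← shuffle_monomial, ← shuffle_monomial, shuffle_comm θ _ (monomial w)]
    simp only [monomial_cons u v, monomial_cons u' w, halfShuffle_letter_mul]
    abel
  | zero_left | zero_right => simp
  | add_left _ _ _ _ _ _ h₁ h₂ | add_right _ _ _ _ _ _ h₁ h₂ =>
    simp only [map_add, LinearMap.add_apply, h₁, h₂]
    abel
  | smul_left _ _ _ _ _ h | smul_right _ _ _ _ _ h => simp [h]

theorem shuffle_mem_positive (a : WordAlgebra R α) {b : WordAlgebra R α}
    (hb : b ∈ positive R α) : shuffle θ a b ∈ positive R α := by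
  refine map_mem_of_forall_map_monomial_mem (f := (shuffle θ).flip b) (fun w => ?_) a
  rw [LinearMap.flip_apply]
  cases w with
  | nil => rwa [monomial_nil, one_shuffle]
  | cons u w =>
    rw [shuffle_eq_halfShuffle_add_halfShuffle θ (monomial_cons_mem_positive u w) hb]
    exact add_mem (halfShuffle_mem_positive θ _ _) (halfShuffle_mem_positive θ _ _)

theorem halfShuffle_halfShuffle_of_assoc (u : α) (a : WordAlgebra R α) {b : WordAlgebra R α}
    (hb : b ∈ positive R α) (c : WordAlgebra R α)
    (habc : shuffle θ (shuffle θ a b) c = shuffle θ a (shuffle θ b c)) :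
    halfShuffle θ (halfShuffle θ (monomial [u] * a) b) c =
      halfShuffle θ (monomial [u] * a) (shuffle θ b c) := by
  have counit_ab : counit (shuffle θ a b) = 0 :=
    counit_eq_zero_of_mem_positive (shuffle_mem_positive θ a hb)
  calc
    _ = halfShuffle θ (monomial [u] * shuffle θ a b) c +
          counit a • halfShuffle θ (ofLetters (θ u) * b) c := by
      simp [halfShuffle_letter_mul]
    _ = monomial [u] * shuffle θ (shuffle θ a b) c +
          counit a • (ofLetters (θ u) * shuffle θ b c) := by
      simp [halfShuffle_letter_mul, halfShuffle_ofLetters_mul θ _ hb, counit_ab]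
    _ = _ := by rw [habc, halfShuffle_letter_mul]

theorem shuffle_shuffle_of_zinbiel {a b c : WordAlgebra R α} (ha : a ∈ positive R α)
    (hb : b ∈ positive R α) (hc : c ∈ positive R α)
    (habc : halfShuffle θ (halfShuffle θ a b) c = halfShuffle θ a (shuffle θ b c))
    (hbac : halfShuffle θ (halfShuffle θ b a) c = halfShuffle θ b (shuffle θ a c)) :
    shuffle θ (shuffle θ a b) c =
      halfShuffle θ a (shuffle θ b c) + halfShuffle θ b (shuffle θ a c) +
        halfShuffle θ c (shuffle θ a b) := by
  calc
    _ = halfShuffle θ (shuffle θ a b) c + halfShuffle θ c (shuffle θ a b) :=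
      shuffle_eq_halfShuffle_add_halfShuffle θ (shuffle_mem_positive θ a hb) hc
    _ = halfShuffle θ (halfShuffle θ a b) c + halfShuffle θ (halfShuffle θ b a) c +
          halfShuffle θ c (shuffle θ a b) := by
      congr 1
      rw [shuffle_eq_halfShuffle_add_halfShuffle θ ha hb, map_add, LinearMap.add_apply]
    _ = _ := by rw [habc, hbac]

theorem shuffle_assoc_monomial (v w x : List α) :
    shuffle θ (shuffle θ (monomial v) (monomial w)) (monomial x) =
      shuffle θ (monomial v) (shuffle θ (monomial w) (monomial x)) := by
  match v, w, x with
  | [], _, _ | _, [], _ | _, _, [] => simp only [monomial_nil, one_shuffle, shuffle_one]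
  | u₁ :: v, u₂ :: w, u₃ :: x =>
    have ha := monomial_cons_mem_positive (R := R) u₁ v
    have hb := monomial_cons_mem_positive (R := R) u₂ w
    have hc := monomial_cons_mem_positive (R := R) u₃ x
    have zinbiel_abc := halfShuffle_halfShuffle_of_assoc θ u₁ _ hb _
      (shuffle_assoc_monomial v (u₂ :: w) (u₃ :: x))
    have zinbiel_bac := halfShuffle_halfShuffle_of_assoc θ u₂ _ ha _
      (shuffle_assoc_monomial w (u₁ :: v) (u₃ :: x))
    have zinbiel_bca := halfShuffle_halfShuffle_of_assoc θ u₂ _ hc _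
      (shuffle_assoc_monomial w (u₃ :: x) (u₁ :: v))
    have zinbiel_cba := halfShuffle_halfShuffle_of_assoc θ u₃ _ hb _
      (shuffle_assoc_monomial x (u₂ :: w) (u₁ :: v))
    simp only [← monomial_cons] at zinbiel_abc zinbiel_bac zinbiel_bca zinbiel_cba
    rw [shuffle_comm θ (monomial (u₁ :: v)) (shuffle θ _ _),
      shuffle_shuffle_of_zinbiel θ ha hb hc zinbiel_abc zinbiel_bac,
      shuffle_shuffle_of_zinbiel θ hb hc ha zinbiel_bca zinbiel_cba,
      shuffle_comm θ (monomial (u₃ :: x)) (monomial (u₁ :: v)),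
      shuffle_comm θ (monomial (u₂ :: w)) (monomial (u₁ :: v))]
    abel
termination_by v.length + w.length + x.length

theorem shuffle_assoc (a b c : WordAlgebra R α) :
    shuffle θ (shuffle θ a b) c = shuffle θ a (shuffle θ b c) := by
  suffices (shuffle θ).compr₂ (shuffle θ) =
      (LinearMap.llcomp R _ _ _).compl₁₂ (shuffle θ) (shuffle θ) from
    LinearMap.congr_fun (LinearMap.congr_fun₂ this a b) c
  exact LinearMap.ext_basis monomial monomial fun v w => monomial.ext fun x =>
    shuffle_assoc_monomial θ v w x

end WordAlgebra

open WordAlgebra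

theorem nsh_comm_and_assoc_general {R α : Type*} [CommSemiring R] (θ : α → α →₀ R) :
    (∀ a b : WordAlgebra R α, shuffle θ a b = shuffle θ b a) ∧
    (∀ a b c : WordAlgebra R α,
      shuffle θ (shuffle θ a b) c = shuffle θ a (shuffle θ b c)) :=
  ⟨shuffle_comm θ, shuffle_assoc θ⟩

namespace H

/-- The twist `u ↦ -τ(u)`, for which the twisted shuffle product is the n-shuffle product. -/
noncomputable def negExchange (u : Letter) : Letter →₀ ℚ := Finsupp.single (τ u) (-1)

theorem word_ofList (w : List Letter) : word (FreeMonoid.ofList w) = monomial w :=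
  (monomial_eq_single w).symm

theorem δ_eq_counit_monomial (w : List Letter) : δ w = counit (monomial w : H) := by
  cases w with
  | nil => rw [monomial_nil, map_one, δ]
  | cons u w => rw [counit_monomial_cons, δ]

theorem nshW_eq_shuffleWord (v w : List Letter) : nshW v w = shuffleWord negExchange v w := by
  fun_induction nshW v w with
  | case1 | case2 => rw [shuffleWord, word_ofList]
  | case3 u₁ w₁ u₂ w₂ ih₁ ih₂ =>
    have word_of (u : Letter) : word (FreeMonoid.of u) = monomial [u] := word_ofList [u]
    rw [shuffleWord, ih₁, ih₂]
    simp only [word_of, word_ofList, monomial_cons (τ u₁) (u₂ :: w₂),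
      monomial_cons (τ u₂) (u₁ :: w₁), δ_eq_counit_monomial, negExchange, ofLetters_single,
      neg_smul, one_smul, neg_mul, smul_neg, sub_eq_add_neg]

theorem nsh_eq_shuffle (a b : H) : nsh a b = shuffle negExchange a b := by
  simp only [nsh, shuffle, nshW_eq_shuffleWord, constr_monomial_apply,
    LinearMap.finsupp_sum_apply, LinearMap.smul_apply, Finsupp.smul_sum, smul_smul]

end H

/-- The n-shuffle product `ш̄` on `H` is commutative and associative. -/
theorem nsh_comm_and_assoc :
    (∀ w1 w2 : H, nsh w1 w2 = nsh w2 w1) ∧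
    (∀ w1 w2 w3 : H, nsh (nsh w1 w2) w3 = nsh w1 (nsh w2 w3)) := by
  simpa only [nsh_eq_shuffle] using nsh_comm_and_assoc_general negExchange
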